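/- arXiv:2309.03515 — 2 statements merged into one kernel-verified Lean document; each statement's English description precedes it below -/
import Mathlib

section
/- Let n ≥ 2, c > 0, and let σ(x) = −eₙ + 2(x + eₙ)/|x + eₙ|² be the inversion in the sphere S^{n−1}(−eₙ, √2). For t ∈ (0,1) put x_t = t·e₁ and y_t = −t·e₁. Then lim_{t→1⁻} h_{ℍⁿ,c}(σ(x_t), σ(y_t)) / h_{𝔹ⁿ,c}(x_t, y_t) = 1. Consequently, the constant 1 in the bound h_{𝔹ⁿ,c}(x, y) ≤ h_{ℍⁿ,c}(σ(x), σ(y)) is best possible. -/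
noncomputable section

open Real Filter

/-- The hyperbolic-type metric `h_{𝔹ⁿ,c}` on the unit ball. -/
def hB {n : ℕ} (c : ℝ) (x y : EuclideanSpace ℝ (Fin n)) : ℝ :=
  Real.log (1 + c * ‖x - y‖ / Real.sqrt ((1 - ‖x‖) * (1 - ‖y‖)))

/-- The n-th (last) coordinate of a point of `ℝⁿ`. -/
def lastCoord {n : ℕ} (x : EuclideanSpace ℝ (Fin n)) : ℝ :=
  if h : 0 < n then x ⟨n - 1, Nat.sub_lt h one_pos⟩ else 0

/-- The hyperbolic-type metric `h_{ℍⁿ,c}` on the upper half space. -/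
def hH {n : ℕ} (c : ℝ) (x y : EuclideanSpace ℝ (Fin n)) : ℝ :=
  Real.log (1 + c * ‖x - y‖ / Real.sqrt (lastCoord x * lastCoord y))

/-- The hyperbolic-type metric `h_{𝔹ⁿ\{p},c}` on the punctured unit ball. -/
def hP {n : ℕ} (c : ℝ) (p x y : EuclideanSpace ℝ (Fin n)) : ℝ :=
  Real.log (1 + c * ‖x - y‖ /
    Real.sqrt (min ‖x - p‖ (1 - ‖x‖) * min ‖y - p‖ (1 - ‖y‖)))

/-- The inversion `σ_a` in the sphere `S^{n-1}(a*, r)`, `a* = a/|a|²`, `r² = 1/|a|² - 1`. -/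
def sigmaInv {n : ℕ} (a x : EuclideanSpace ℝ (Fin n)) : EuclideanSpace ℝ (Fin n) :=
  (‖a‖ ^ 2)⁻¹ • a +
    (((‖a‖ ^ 2)⁻¹ - 1) / ‖x - (‖a‖ ^ 2)⁻¹ • a‖ ^ 2) • (x - (‖a‖ ^ 2)⁻¹ • a)

/-- The last standard basis vector `eₙ` of `ℝⁿ`. -/
def eLast (n : ℕ) : EuclideanSpace ℝ (Fin n) :=
  if h : 0 < n then EuclideanSpace.single ⟨n - 1, Nat.sub_lt h one_pos⟩ 1 else 0

/-- The first standard basis vector `e₁` of `ℝⁿ`. -/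
def eFirst (n : ℕ) : EuclideanSpace ℝ (Fin n) :=
  if h : 0 < n then EuclideanSpace.single ⟨0, h⟩ 1 else 0

/-- The inversion `σ` in the sphere `S^{n-1}(-eₙ, √2)`, mapping `𝔹ⁿ` onto `ℍⁿ`. -/
def sigmaBH {n : ℕ} (x : EuclideanSpace ℝ (Fin n)) : EuclideanSpace ℝ (Fin n) :=
  -eLast n + (2 / ‖x + eLast n‖ ^ 2) • (x + eLast n)

/-!
The map `σ` is the inversion in the sphere `S(-eₙ, √2)`, so distances transform by
`|σ(x) - σ(y)| = 2|x - y| / (|x + eₙ| |y + eₙ|)`, while the height of `σ(x)` is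
`(1 - |x|²) / |x + eₙ|²`. The factors `|x + eₙ|`, `|y + eₙ|` cancel in the quotient defining `h_ℍ`:
`h_ℍ(σ(x), σ(y)) = log (1 + c · 2|x - y| / √((1 - |x|²)(1 - |y|²)))`.
Writing `1 - |x|² = (1 - |x|)(1 + |x|)`, the argument differs from the one in `h_𝔹(x, y)` only by
the factor `2 / √((1 + |x|)(1 + |y|))`, which lies between `1` and `2`. As soon as `x` or `y`
approaches the unit sphere while `|x - y|` stays away from `0`, both arguments tend to infinity, and
a convergent factor does not affect the ratio of their logarithms in the limit.
-/

open Metric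
open scoped Topology RealInnerProductSpace

section BoundaryAsymptotics

theorem tendsto_log_div_log {α : Type*} {l : Filter α} {f g : α → ℝ} {k : ℝ}
    (hf : Tendsto f l atTop) (hk : k ≠ 0) (hgf : Tendsto (fun a => g a / f a) l (𝓝 k)) :
    Tendsto (fun a => log (g a) / log (f a)) l (𝓝 1) := by
  have log_f : Tendsto (fun a => log (f a)) l atTop := tendsto_log_atTop.comp hf
  have lim : Tendsto (fun a => log (g a / f a) / log (f a) + 1) l (𝓝 1) := by
    simpa only [zero_add] using ((hgf.log hk).div_atTop log_f).add_const 1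
  refine lim.congr' ?_
  filter_upwards [hf.eventually_ne_atTop 0, log_f.eventually_ne_atTop 0, hgf.eventually_ne hk]
    with a f_ne log_f_ne gf_ne
  rw [log_div (div_ne_zero_iff.mp gf_ne).1 f_ne, sub_div, div_self log_f_ne, sub_add_cancel]

theorem tendsto_one_add_mul_div_one_add_mul {α : Type*} {l : Filter α} {r v : α → ℝ} {c k : ℝ}
    (hc : c ≠ 0) (hv : Tendsto v l atTop) (hr : Tendsto r l (𝓝 k)) :
    Tendsto (fun a => (1 + c * (r a * v a)) / (1 + c * v a)) l (𝓝 k) := by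
  have inv_v : Tendsto (fun a => (v a)⁻¹) l (𝓝 0) := tendsto_inv_atTop_zero.comp hv
  have lim : Tendsto (fun a => ((v a)⁻¹ + c * r a) / ((v a)⁻¹ + c)) l (𝓝 k) := by
    simpa only [zero_add, mul_div_cancel_left₀ k hc, Pi.div_def] using
      (inv_v.add (hr.const_mul c)).div (inv_v.add_const c) (by rwa [zero_add])
  refine lim.congr' ?_
  filter_upwards [hv.eventually_ne_atTop 0] with a v_ne
  rw [← mul_div_mul_right _ _ v_ne, add_mul, add_mul, inv_mul_cancel₀ v_ne, mul_assoc]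

variable {E : Type*} [NormedAddCommGroup E] {p q : E}

theorem eventually_norm_lt_one_nhdsWithin_ball_prod (p q : E) :
    ∀ᶠ z in 𝓝[ball 0 1] p ×ˢ 𝓝[ball 0 1] q, ‖z.1‖ < 1 ∧ ‖z.2‖ < 1 := by
  filter_upwards [prod_mem_prod (self_mem_nhdsWithin (a := p) (s := ball (0 : E) 1))
    (self_mem_nhdsWithin (a := q) (s := ball (0 : E) 1))] with z hz
  exact ⟨mem_ball_zero_iff.mp hz.1, mem_ball_zero_iff.mp hz.2⟩

theorem nhdsWithin_ball_prod_le (p q : E) :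
    𝓝[ball 0 1] p ×ˢ 𝓝[ball 0 1] q ≤ 𝓝 (p, q) := by
  rw [← nhdsWithin_prod_eq]
  exact nhdsWithin_le_nhds

theorem tendsto_norm_sub_div_sqrt_atTop (hp : ‖p‖ = 1) (hpq : p ≠ q) :
    Tendsto (fun z : E × E => ‖z.1 - z.2‖ / √((1 - ‖z.1‖) * (1 - ‖z.2‖)))
      (𝓝[ball 0 1] p ×ˢ 𝓝[ball 0 1] q) atTop := by
  have num : Tendsto (fun z : E × E => ‖z.1 - z.2‖)
      (𝓝[ball 0 1] p ×ˢ 𝓝[ball 0 1] q) (𝓝 ‖p - q‖) := by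
    have cont : Continuous fun z : E × E => ‖z.1 - z.2‖ := by fun_prop
    exact (cont.tendsto (p, q)).mono_left (nhdsWithin_ball_prod_le p q)
  have den : Tendsto (fun z : E × E => √((1 - ‖z.1‖) * (1 - ‖z.2‖)))
      (𝓝[ball 0 1] p ×ˢ 𝓝[ball 0 1] q) (𝓝[>] 0) := by
    refine tendsto_nhdsWithin_iff.mpr ⟨?_, ?_⟩
    · have cont : Continuous fun z : E × E => √((1 - ‖z.1‖) * (1 - ‖z.2‖)) := by fun_prop
      exact (cont.tendsto' (p, q) 0 (by simp [hp])).mono_left (nhdsWithin_ball_prod_le p q)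
    · filter_upwards [eventually_norm_lt_one_nhdsWithin_ball_prod p q] with z ⟨hz₁, hz₂⟩
      exact sqrt_pos.mpr (mul_pos (sub_pos.mpr hz₁) (sub_pos.mpr hz₂))
  simpa only [div_eq_mul_inv, Function.comp_def] using
    num.pos_mul_atTop (norm_pos_iff.mpr (sub_ne_zero.mpr hpq))
      (tendsto_inv_nhdsGT_zero.comp den)

theorem two_mul_div_sqrt_one_sub_sq {a b : ℝ} (d : ℝ) (ha : -1 ≤ a) (hb : -1 ≤ b) :
    2 * d / √((1 - a ^ 2) * (1 - b ^ 2)) =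
      2 / √((1 + a) * (1 + b)) * (d / √((1 - a) * (1 - b))) := by
  have factor : (1 - a ^ 2) * (1 - b ^ 2) = (1 + a) * (1 + b) * ((1 - a) * (1 - b)) := by ring
  have nonneg : 0 ≤ (1 + a) * (1 + b) := mul_nonneg (by linarith) (by linarith)
  rw [factor, sqrt_mul nonneg, div_mul_div_comm]

theorem tendsto_two_div_sqrt_one_add_norm (p q : E) :
    Tendsto (fun z : E × E => 2 / √((1 + ‖z.1‖) * (1 + ‖z.2‖)))
      (𝓝 (p, q)) (𝓝 (2 / √((1 + ‖p‖) * (1 + ‖q‖)))) := by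
  have cont : Continuous fun z : E × E => 2 / √((1 + ‖z.1‖) * (1 + ‖z.2‖)) :=
    continuous_const.div (by fun_prop) fun z => (sqrt_pos.mpr (by positivity)).ne'
  exact cont.tendsto (p, q)

variable [NormedSpace ℝ E]

theorem ne_neg_of_norm_eq_one (hp : ‖p‖ = 1) : p ≠ -p := by
  have : IsAddTorsionFree E := .of_isTorsionFree ℝ E
  exact self_ne_neg.mpr (norm_ne_zero_iff.mp (hp.trans_ne one_ne_zero))

theorem tendsto_smul_nhdsWithin_ball (hp : ‖p‖ = 1) :
    Tendsto (fun t : ℝ => t • p) (𝓝[Set.Ioo 0 1] 1) (𝓝[ball 0 1] p) := by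
  refine tendsto_nhdsWithin_iff.mpr ⟨?_, ?_⟩
  · have cont : Continuous fun t : ℝ => t • p := by fun_prop
    exact (cont.tendsto' 1 p (one_smul ℝ p)).mono_left nhdsWithin_le_nhds
  · filter_upwards [self_mem_nhdsWithin] with t ⟨ht₀, ht₁⟩
    rwa [mem_ball_zero_iff, norm_smul, hp, mul_one, norm_of_nonneg ht₀.le]

theorem tendsto_smul_prodMk_neg_smul (hp : ‖p‖ = 1) :
    Tendsto (fun t : ℝ => (t • p, -(t • p))) (𝓝[Set.Ioo 0 1] 1)
      (𝓝[ball 0 1] p ×ˢ 𝓝[ball 0 1] (-p)) := by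
  simp_rw [← smul_neg]
  exact (tendsto_smul_nhdsWithin_ball hp).prodMk
    (tendsto_smul_nhdsWithin_ball ((norm_neg p).trans hp))

end BoundaryAsymptotics

section Inversion

variable {n : ℕ}

theorem norm_eFirst (hn : 0 < n) : ‖eFirst n‖ = 1 := by
  simp [eFirst, hn]

theorem norm_eLast (hn : 0 < n) : ‖eLast n‖ = 1 := by
  simp [eLast, hn]

theorem inner_eLast (x : EuclideanSpace ℝ (Fin n)) : ⟪eLast n, x⟫ = lastCoord x := by
  by_cases hn : 0 < n <;> simp [eLast, lastCoord, hn, EuclideanSpace.inner_single_left]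

theorem sigmaBH_eq_inversion (x : EuclideanSpace ℝ (Fin n)) :
    sigmaBH x = EuclideanGeometry.inversion (-eLast n) √2 x := by
  rw [sigmaBH, EuclideanGeometry.inversion, dist_eq_norm, sub_neg_eq_add, div_pow,
    sq_sqrt zero_le_two, vsub_eq_sub, sub_neg_eq_add, vadd_eq_add, add_comm]

theorem norm_sigmaBH_sub_sigmaBH {x y : EuclideanSpace ℝ (Fin n)} (hx : x ≠ -eLast n)
    (hy : y ≠ -eLast n) :
    ‖sigmaBH x - sigmaBH y‖ = 2 / (‖x + eLast n‖ * ‖y + eLast n‖) * ‖x - y‖ := by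
  rw [← dist_eq_norm, sigmaBH_eq_inversion, sigmaBH_eq_inversion,
    EuclideanGeometry.dist_inversion_inversion hx hy, sq_sqrt zero_le_two]
  simp only [dist_eq_norm, sub_neg_eq_add]

theorem lastCoord_sigmaBH (hn : 0 < n) {x : EuclideanSpace ℝ (Fin n)} (hx : x ≠ -eLast n) :
    lastCoord (sigmaBH x) = (1 - ‖x‖ ^ 2) / ‖x + eLast n‖ ^ 2 := by
  have norm_ne_zero : ‖x + eLast n‖ ≠ 0 := norm_ne_zero_iff.mpr (mt eq_neg_of_add_eq_zero_left hx)
  have norm_sq : ‖x + eLast n‖ ^ 2 = ‖x‖ ^ 2 + 2 * ⟪eLast n, x⟫ + 1 := by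
    rw [norm_add_sq_real, norm_eLast hn, one_pow, real_inner_comm]
  rw [← inner_eLast, sigmaBH, inner_add_right, inner_neg_right, inner_smul_right,
    inner_add_right, real_inner_self_eq_norm_sq, norm_eLast hn]
  field_simp
  rw [norm_sq]
  ring

theorem ne_neg_eLast_of_norm_lt_one (hn : 0 < n) {x : EuclideanSpace ℝ (Fin n)} (hx : ‖x‖ < 1) :
    x ≠ -eLast n := by
  rintro rfl
  rw [norm_neg, norm_eLast hn] at hx
  exact hx.false

theorem hH_sigmaBH (hn : 0 < n) (c : ℝ) {x y : EuclideanSpace ℝ (Fin n)} (hx : ‖x‖ < 1)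
    (hy : ‖y‖ < 1) :
    hH c (sigmaBH x) (sigmaBH y) =
      log (1 + c * (2 * ‖x - y‖ / √((1 - ‖x‖ ^ 2) * (1 - ‖y‖ ^ 2)))) := by
  have hx' := ne_neg_eLast_of_norm_lt_one hn hx
  have hy' := ne_neg_eLast_of_norm_lt_one hn hy
  have norms_ne_zero : ‖x + eLast n‖ * ‖y + eLast n‖ ≠ 0 :=
    mul_ne_zero (norm_ne_zero_iff.mpr (mt eq_neg_of_add_eq_zero_left hx'))
      (norm_ne_zero_iff.mpr (mt eq_neg_of_add_eq_zero_left hy'))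
  have sqrt_heights : √(lastCoord (sigmaBH x) * lastCoord (sigmaBH y)) =
      √((1 - ‖x‖ ^ 2) * (1 - ‖y‖ ^ 2)) / (‖x + eLast n‖ * ‖y + eLast n‖) := by
    rw [lastCoord_sigmaBH hn hx', lastCoord_sigmaBH hn hy', div_mul_div_comm, ← mul_pow,
      sqrt_div' _ (sq_nonneg _), sqrt_sq (by positivity)]
  rw [hH, sqrt_heights, norm_sigmaBH_sub_sigmaBH hx' hy', mul_div_assoc, div_mul_eq_mul_div,
    div_div_div_cancel_right₀ norms_ne_zero]

end Inversion

theorem ball_to_halfspace_constant_one_sharp_general {n : ℕ} {c : ℝ} (hc : 0 < c)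
    {p q : EuclideanSpace ℝ (Fin n)} (hp : ‖p‖ = 1) (hpq : p ≠ q) :
    Tendsto (fun z => hH c (sigmaBH z.1) (sigmaBH z.2) / hB c z.1 z.2)
      (𝓝[ball 0 1] p ×ˢ 𝓝[ball 0 1] q) (𝓝 1) := by
  have hn : 0 < n := by
    rcases n.eq_zero_or_pos with rfl | hn
    · exact absurd (Subsingleton.elim p q) hpq
    · exact hn
  have limit_ne_zero : 2 / √((1 + ‖p‖) * (1 + ‖q‖)) ≠ 0 := by positivity
  have hv := tendsto_norm_sub_div_sqrt_atTop hp hpq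
  have hr := (tendsto_two_div_sqrt_one_add_norm p q).mono_left (nhdsWithin_ball_prod_le p q)
  refine (tendsto_log_div_log (tendsto_atTop_add_const_left _ 1 (hv.const_mul_atTop hc))
    limit_ne_zero (tendsto_one_add_mul_div_one_add_mul hc.ne' hv hr)).congr' ?_
  filter_upwards [eventually_norm_lt_one_nhdsWithin_ball_prod p q] with z ⟨hz₁, hz₂⟩
  rw [hH_sigmaBH hn c hz₁ hz₂, hB, mul_div_assoc c, two_mul_div_sqrt_one_sub_sq _
    (by linarith [norm_nonneg z.1]) (by linarith [norm_nonneg z.2])]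

theorem ball_to_halfspace_constant_one_sharp (n : ℕ) (hn : 2 ≤ n)
    (c : ℝ) (hc : 0 < c) :
    Filter.Tendsto
      (fun t : ℝ =>
        hH c (sigmaBH (t • eFirst n)) (sigmaBH (-(t • eFirst n))) /
          hB c (t • eFirst n) (-(t • eFirst n)))
      (nhdsWithin 1 (Set.Ioo (0 : ℝ) 1)) (nhds 1) := by
  have norm_e : ‖eFirst n‖ = 1 := norm_eFirst (by omega)
  simpa only [Function.comp_def] using
    (ball_to_halfspace_constant_one_sharp_general hc norm_e
      (ne_neg_of_norm_eq_one norm_e)).comp (tendsto_smul_prodMk_neg_smul norm_e)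
end
end

section
/- Let n ≥ 2, a ∈ 𝔹ⁿ \ {0}, c > 0, and let σ_a be the inversion in the sphere S^{n−1}(a*, r). Then for all x, y ∈ 𝔹ⁿ \ {0} with |y| ≤ |x|: log(1 + c·|σ_a(x) − σ_a(y)| / √(|σ_a(x) − a|·(1 − |σ_a(y)|))) ≤ √(2(1 + |a|)/(2 − |a|)) · h_{𝔹ⁿ\{0},c}(x, y). -/
noncomputable section

open Real Filter

/-!
Write `d x = ‖a‖ * ‖x - a*‖`, so that `d x ^ 2 = ‖x - a‖ ^ 2 + (1 - ‖a‖ ^ 2) * (1 - ‖x‖ ^ 2)` and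
`σ_a` rescales the distance of `x` and `y` by `(1 - ‖a‖ ^ 2) / (d x * d y)`. Expressing
`‖σ_a x - a‖ = ‖σ_a x - σ_a 0‖` and `1 - ‖σ_a y‖ ^ 2` in the same way, all powers of `d y` and of
`1 - ‖a‖ ^ 2` cancel in the square of the quotient to be bounded:
`‖σ_a x - σ_a y‖ ^ 2 / (‖σ_a x - a‖ * (1 - ‖σ_a y‖))
  = (1 + ‖σ_a y‖) / (1 + ‖y‖) * (‖x - y‖ ^ 2 / (‖x‖ * d x * (1 - ‖y‖)))`.
The first factor is at most `1 + ‖a‖`, and `d x ≥ 1 - ‖a‖ * ‖x‖` makes `‖x‖ * d x` at least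
`(2 - ‖a‖) / 2 * min ‖x‖ (1 - ‖x‖)`. Bernoulli's inequality carries the square root of the constant
through the logarithm.
-/

lemma log_one_add_mul_le_mul_log_one_add {k u : ℝ} (hk : 1 ≤ k) (hu : 0 ≤ u) :
    log (1 + k * u) ≤ k * log (1 + u) := by
  rw [← log_rpow (by positivity)]
  exact log_le_log (by positivity) (one_add_mul_self_le_rpow_one_add (by linarith) hk)

lemma div_sqrt_eq_sqrt_sq_div {p : ℝ} (hp : 0 ≤ p) (q : ℝ) : p / √q = √(p ^ 2 / q) := by
  rw [sqrt_div (sq_nonneg p), sqrt_sq hp]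

lemma min_one_sub_mul_two_sub_le {s t : ℝ} (hs : 0 ≤ s) (hs1 : s ≤ 1) (ht : 0 ≤ t) (ht1 : t ≤ 1) :
    min t (1 - t) * (2 - s) ≤ 2 * (t * (1 - s * t)) := by
  have hs2 : 0 ≤ 2 - s := by linarith
  rcases le_total t (1 / 2) with ht2 | ht2
  · calc min t (1 - t) * (2 - s) ≤ t * (2 - s) := by gcongr; exact min_le_left _ _
      _ ≤ 2 * (t * (1 - s * t)) := by
        linarith [mul_nonneg (mul_nonneg hs ht) (by linarith : 0 ≤ 1 - 2 * t)]
  · have hst : s * (t + 1) ≤ 2 := by nlinarith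
    calc min t (1 - t) * (2 - s) ≤ (1 - t) * (2 - s) := by gcongr; exact min_le_right _ _
      _ ≤ 2 * (t * (1 - s * t)) := by
        linarith [mul_nonneg (by linarith : 0 ≤ 2 * t - 1) (sub_nonneg.2 hst)]

lemma one_sub_norm_sq_pos {E : Type*} [SeminormedAddCommGroup E] {x : E} (hx : ‖x‖ < 1) :
    0 < 1 - ‖x‖ ^ 2 :=
  sub_pos.2 (pow_lt_one₀ (norm_nonneg x) hx two_ne_zero)

lemma inv_norm_sq_sub_one_pos {E : Type*} [NormedAddCommGroup E] {a : E} (ha : a ≠ 0)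
    (ha1 : ‖a‖ < 1) : 0 < (‖a‖ ^ 2)⁻¹ - 1 :=
  sub_pos.2 <| (one_lt_inv₀ (pow_pos (norm_pos_iff.2 ha) 2)).2 (sub_pos.1 (one_sub_norm_sq_pos ha1))

section PoleDist

variable {E : Type*} [NormedAddCommGroup E] [NormedSpace ℝ E] {a x : E}

/-- The pole `a* = a / ‖a‖ ^ 2` of `σ_a`: the inverse point of `a` in the unit sphere. -/
def ballPole (a : E) : E := (‖a‖ ^ 2)⁻¹ • a

/-- The normalized distance `‖a‖ * ‖x - a*‖` to the pole of `σ_a`. It is the denominator in the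
formulas for `σ_a`, and equals `|1 - conj a * x|` in the complex plane. -/
def poleDist (a x : E) : ℝ := ‖a‖ * dist x (ballPole a)

lemma norm_ballPole (a : E) : ‖ballPole a‖ = ‖a‖⁻¹ := by
  rcases eq_or_ne a 0 with rfl | ha
  · simp [ballPole]
  · have := norm_ne_zero_iff.2 ha
    rw [ballPole, norm_smul, norm_inv, norm_pow, norm_norm]
    field_simp

lemma poleDist_zero (ha : a ≠ 0) : poleDist a 0 = 1 := by
  rw [poleDist, dist_zero_left, norm_ballPole, mul_inv_cancel₀ (norm_ne_zero_iff.2 ha)]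

lemma one_sub_norm_mul_norm_le_poleDist (ha : a ≠ 0) (x : E) :
    1 - ‖a‖ * ‖x‖ ≤ poleDist a x := by
  calc 1 - ‖a‖ * ‖x‖ = ‖a‖ * (‖ballPole a‖ - ‖x‖) := by
        rw [norm_ballPole, mul_sub, mul_inv_cancel₀ (norm_ne_zero_iff.2 ha)]
    _ ≤ poleDist a x := by
        rw [poleDist, dist_comm, dist_eq_norm]
        gcongr
        exact norm_sub_norm_le _ _

lemma poleDist_pos (ha : a ≠ 0) (ha1 : ‖a‖ < 1) (hx : ‖x‖ ≤ 1) : 0 < poleDist a x := by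
  have hax : ‖a‖ * ‖x‖ < 1 := mul_lt_one_of_nonneg_of_lt_one_left (norm_nonneg a) ha1 hx
  linarith [one_sub_norm_mul_norm_le_poleDist ha x]

lemma min_norm_one_sub_norm_le_mul_poleDist (ha : a ≠ 0) (ha1 : ‖a‖ ≤ 1) (hx : ‖x‖ ≤ 1) :
    min ‖x‖ (1 - ‖x‖) ≤ 2 / (2 - ‖a‖) * (‖x‖ * poleDist a x) := by
  rw [div_mul_eq_mul_div, le_div_iff₀ (by linarith)]
  calc min ‖x‖ (1 - ‖x‖) * (2 - ‖a‖) ≤ 2 * (‖x‖ * (1 - ‖a‖ * ‖x‖)) :=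
        min_one_sub_mul_two_sub_le (norm_nonneg a) ha1 (norm_nonneg x) hx
    _ ≤ 2 * (‖x‖ * poleDist a x) := by
        gcongr
        exact one_sub_norm_mul_norm_le_poleDist ha x

end PoleDist

section BallInversion

variable {E : Type*} [NormedAddCommGroup E] [InnerProductSpace ℝ E] {a x y : E}

lemma poleDist_sq (ha : a ≠ 0) (x : E) :
    poleDist a x ^ 2 = ‖x - a‖ ^ 2 + (1 - ‖a‖ ^ 2) * (1 - ‖x‖ ^ 2) := by
  have := norm_ne_zero_iff.2 ha
  rw [poleDist, mul_pow, dist_eq_norm, norm_sub_sq_real, norm_sub_sq_real, norm_ballPole, ballPole,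
    inner_smul_right]
  field_simp
  ring

lemma poleDist_self (ha : a ≠ 0) (ha1 : ‖a‖ ≤ 1) : poleDist a a = 1 - ‖a‖ ^ 2 := by
  have h_nonneg : 0 ≤ 1 - ‖a‖ ^ 2 := sub_nonneg.2 (pow_le_one₀ (norm_nonneg a) ha1)
  have hd_nonneg : 0 ≤ poleDist a a := mul_nonneg (norm_nonneg a) dist_nonneg
  rw [← sq_eq_sq₀ hd_nonneg h_nonneg, poleDist_sq ha, sub_self, norm_zero]
  ring

/-- The inversion `σ_a` of an inner product space in the sphere with centre `a*` and squared radius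
`1 / ‖a‖ ^ 2 - 1`. For `0 < ‖a‖ < 1` this sphere is orthogonal to the unit sphere. -/
def ballInversion (a : E) : E → E :=
  EuclideanGeometry.inversion (ballPole a) √((‖a‖ ^ 2)⁻¹ - 1)

lemma dist_ballInversion (ha : a ≠ 0) (ha1 : ‖a‖ < 1) (hx : 0 < poleDist a x)
    (hy : 0 < poleDist a y) :
    dist (ballInversion a x) (ballInversion a y) =
      (1 - ‖a‖ ^ 2) * dist x y / (poleDist a x * poleDist a y) := by
  have ha_norm := norm_ne_zero_iff.2 ha
  have hx_dist : dist x (ballPole a) ≠ 0 := right_ne_zero_of_mul hx.ne'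
  have hy_dist : dist y (ballPole a) ≠ 0 := right_ne_zero_of_mul hy.ne'
  rw [ballInversion, EuclideanGeometry.dist_inversion_inversion (dist_ne_zero.1 hx_dist)
    (dist_ne_zero.1 hy_dist), sq_sqrt (inv_norm_sq_sub_one_pos ha ha1).le, poleDist, poleDist]
  field_simp

lemma ballInversion_zero (ha : a ≠ 0) (ha1 : ‖a‖ < 1) : ballInversion a 0 = a := by
  have ha_norm := norm_ne_zero_iff.2 ha
  rw [ballInversion, EuclideanGeometry.inversion, div_pow,
    sq_sqrt (inv_norm_sq_sub_one_pos ha ha1).le, dist_zero_left, norm_ballPole, vsub_eq_sub,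
    vadd_eq_add, zero_sub, ballPole, smul_neg, smul_smul, ← neg_smul, ← add_smul]
  convert one_smul ℝ a
  field_simp
  ring

lemma ballInversion_self (ha : a ≠ 0) (ha1 : ‖a‖ < 1) : ballInversion a a = 0 := by
  have h_radius := (sqrt_pos.2 (inv_norm_sq_sub_one_pos ha ha1)).ne'
  calc ballInversion a a = ballInversion a (ballInversion a 0) := by rw [ballInversion_zero ha ha1]
    _ = 0 := EuclideanGeometry.inversion_inversion (ballPole a) h_radius 0

lemma norm_ballInversion_sub_self (ha : a ≠ 0) (ha1 : ‖a‖ < 1) (hx : 0 < poleDist a x) :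
    ‖ballInversion a x - a‖ = (1 - ‖a‖ ^ 2) * ‖x‖ / poleDist a x := by
  have h_zero : 0 < poleDist a 0 := by simp only [poleDist_zero ha, zero_lt_one]
  simpa only [ballInversion_zero ha ha1, poleDist_zero ha, mul_one, dist_zero_right, dist_eq_norm,
    sub_zero] using dist_ballInversion ha ha1 hx h_zero

lemma norm_ballInversion (ha : a ≠ 0) (ha1 : ‖a‖ < 1) (hx : 0 < poleDist a x) :
    ‖ballInversion a x‖ = ‖x - a‖ / poleDist a x := by
  have h_pos := one_sub_norm_sq_pos ha1
  have h_self : 0 < poleDist a a := by rwa [poleDist_self ha ha1.le]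
  rw [← dist_zero_right, ← ballInversion_self ha ha1, dist_ballInversion ha ha1 hx h_self,
    poleDist_self ha ha1.le, dist_eq_norm]
  field_simp

lemma one_sub_norm_ballInversion_sq (ha : a ≠ 0) (ha1 : ‖a‖ < 1) (hx : 0 < poleDist a x) :
    1 - ‖ballInversion a x‖ ^ 2 = (1 - ‖a‖ ^ 2) * (1 - ‖x‖ ^ 2) / poleDist a x ^ 2 := by
  rw [norm_ballInversion ha ha1 hx, div_pow, one_sub_div (by positivity), poleDist_sq ha]
  ring

lemma norm_ballInversion_le (ha : a ≠ 0) (ha1 : ‖a‖ < 1) (hx : ‖x‖ ≤ 1) :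
    ‖ballInversion a x‖ ≤ (‖a‖ + ‖x‖) / (1 + ‖a‖ * ‖x‖) := by
  have hd := poleDist_pos ha ha1 hx
  have h_prod : 0 ≤ (1 - ‖a‖ ^ 2) * (1 - ‖x‖ ^ 2) :=
    mul_nonneg (one_sub_norm_sq_pos ha1).le (sub_nonneg.2 (pow_le_one₀ (norm_nonneg x) hx))
  have h_triangle : ‖x - a‖ ^ 2 ≤ (‖a‖ + ‖x‖) ^ 2 := by
    gcongr
    exact (norm_sub_le x a).trans_eq (add_comm _ _)
  rw [norm_ballInversion ha ha1 hd, div_le_div_iff₀ hd (by positivity)]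
  refine le_of_sq_le_sq ?_ (by positivity)
  calc (‖x - a‖ * (1 + ‖a‖ * ‖x‖)) ^ 2
      = ‖x - a‖ ^ 2 * (‖a‖ + ‖x‖) ^ 2 + ‖x - a‖ ^ 2 * ((1 - ‖a‖ ^ 2) * (1 - ‖x‖ ^ 2)) := by ring
    _ ≤ ‖x - a‖ ^ 2 * (‖a‖ + ‖x‖) ^ 2 +
          (‖a‖ + ‖x‖) ^ 2 * ((1 - ‖a‖ ^ 2) * (1 - ‖x‖ ^ 2)) := by gcongr
    _ = ((‖a‖ + ‖x‖) * poleDist a x) ^ 2 := by rw [mul_pow _ (poleDist a x), poleDist_sq ha]; ring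

lemma one_add_norm_ballInversion_le (ha : a ≠ 0) (ha1 : ‖a‖ < 1) (hx : ‖x‖ ≤ 1) :
    1 + ‖ballInversion a x‖ ≤ (1 + ‖a‖) * (1 + ‖x‖) := by
  calc 1 + ‖ballInversion a x‖ ≤ 1 + (‖a‖ + ‖x‖) / (1 + ‖a‖ * ‖x‖) := by
        gcongr
        exact norm_ballInversion_le ha ha1 hx
    _ = (1 + ‖a‖) * (1 + ‖x‖) / (1 + ‖a‖ * ‖x‖) := by field_simp; ring
    _ ≤ (1 + ‖a‖) * (1 + ‖x‖) :=
        div_le_self (by positivity) (le_add_of_nonneg_right (by positivity))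

lemma norm_ballInversion_sub_sq_div (ha : a ≠ 0) (ha1 : ‖a‖ < 1) (hx : 0 < poleDist a x)
    (hy : ‖y‖ < 1) :
    ‖ballInversion a x - ballInversion a y‖ ^ 2 /
        (‖ballInversion a x - a‖ * (1 - ‖ballInversion a y‖)) =
      (1 + ‖ballInversion a y‖) / (1 + ‖y‖) *
        (‖x - y‖ ^ 2 / (‖x‖ * poleDist a x * (1 - ‖y‖))) := by
  have hd := poleDist_pos ha ha1 hy.le
  have ha_pos := one_sub_norm_sq_pos ha1
  have hy_pos : 0 < 1 - ‖y‖ := sub_pos.2 hy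
  have h_one_sub : 1 - ‖ballInversion a y‖ =
      (1 - ‖a‖ ^ 2) * ((1 - ‖y‖) * (1 + ‖y‖)) /
        (poleDist a y ^ 2 * (1 + ‖ballInversion a y‖)) := by
    rw [← div_div, eq_div_iff (by positivity)]
    linear_combination one_sub_norm_ballInversion_sq ha ha1 hd
  rw [h_one_sub, norm_ballInversion_sub_self ha ha1 hx, ← dist_eq_norm,
    dist_ballInversion ha ha1 hx hd, dist_eq_norm]
  field_simp

lemma norm_ballInversion_sub_sq_div_le (ha : a ≠ 0) (ha1 : ‖a‖ < 1) (hx : ‖x‖ < 1) (hx0 : x ≠ 0)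
    (hy : ‖y‖ < 1) (hy0 : y ≠ 0) :
    ‖ballInversion a x - ballInversion a y‖ ^ 2 /
        (‖ballInversion a x - a‖ * (1 - ‖ballInversion a y‖)) ≤
      2 * (1 + ‖a‖) / (2 - ‖a‖) *
        (‖x - y‖ ^ 2 / (min ‖x‖ (1 - ‖x‖) * min ‖y‖ (1 - ‖y‖))) := by
  have hd := poleDist_pos ha ha1 hx.le
  have hx_pos := norm_pos_iff.2 hx0
  have hy_pos : 0 < 1 - ‖y‖ := sub_pos.2 hy
  have hx_min : 0 < min ‖x‖ (1 - ‖x‖) := lt_min hx_pos (sub_pos.2 hx)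
  have hy_min : 0 < min ‖y‖ (1 - ‖y‖) := lt_min (norm_pos_iff.2 hy0) hy_pos
  have ha_two : 0 < 2 - ‖a‖ := by linarith
  have h_factor : (1 + ‖ballInversion a y‖) / (1 + ‖y‖) ≤ 1 + ‖a‖ := by
    rw [div_le_iff₀ (by positivity)]
    exact one_add_norm_ballInversion_le ha ha1 hy.le
  have h_min : min ‖x‖ (1 - ‖x‖) * min ‖y‖ (1 - ‖y‖) ≤
      2 / (2 - ‖a‖) * (‖x‖ * poleDist a x) * (1 - ‖y‖) := by
    gcongr
    · exact min_norm_one_sub_norm_le_mul_poleDist ha ha1.le hx.le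
    · exact min_le_right _ _
  calc _ = (1 + ‖ballInversion a y‖) / (1 + ‖y‖) *
        (‖x - y‖ ^ 2 / (‖x‖ * poleDist a x * (1 - ‖y‖))) :=
        norm_ballInversion_sub_sq_div ha ha1 hd hy
    _ ≤ (1 + ‖a‖) * (‖x - y‖ ^ 2 / (‖x‖ * poleDist a x * (1 - ‖y‖))) := by gcongr
    _ = 2 * (1 + ‖a‖) / (2 - ‖a‖) *
        (‖x - y‖ ^ 2 / (2 / (2 - ‖a‖) * (‖x‖ * poleDist a x) * (1 - ‖y‖))) := by field_simp
    _ ≤ _ := by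
        refine mul_le_mul_of_nonneg_left ?_ (by positivity)
        exact div_le_div_of_nonneg_left (sq_nonneg _) (mul_pos hx_min hy_min) h_min

theorem punctured_case_two_bound_general (ha1 : ‖a‖ < 1) (ha : a ≠ 0) {c : ℝ} (hc : 0 ≤ c)
    (hx : ‖x‖ < 1) (hx0 : x ≠ 0) (hy : ‖y‖ < 1) (hy0 : y ≠ 0) :
    log (1 + c * ‖ballInversion a x - ballInversion a y‖ /
        √(‖ballInversion a x - a‖ * (1 - ‖ballInversion a y‖))) ≤
      √(2 * (1 + ‖a‖) / (2 - ‖a‖)) *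
        log (1 + c * ‖x - y‖ / √(min ‖x‖ (1 - ‖x‖) * min ‖y‖ (1 - ‖y‖))) := by
  have h_const : 1 ≤ 2 * (1 + ‖a‖) / (2 - ‖a‖) := by
    rw [one_le_div (by linarith)]
    linarith [norm_nonneg a]
  have h_quotient : ‖ballInversion a x - ballInversion a y‖ /
        √(‖ballInversion a x - a‖ * (1 - ‖ballInversion a y‖)) ≤
      √(2 * (1 + ‖a‖) / (2 - ‖a‖)) *
        (‖x - y‖ / √(min ‖x‖ (1 - ‖x‖) * min ‖y‖ (1 - ‖y‖))) := by
    rw [div_sqrt_eq_sqrt_sq_div (norm_nonneg _), div_sqrt_eq_sqrt_sq_div (norm_nonneg _),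
      ← sqrt_mul (zero_le_one.trans h_const)]
    exact sqrt_le_sqrt (norm_ballInversion_sub_sq_div_le ha ha1 hx hx0 hy hy0)
  refine le_trans (log_le_log (by positivity) ?_)
    (log_one_add_mul_le_mul_log_one_add (one_le_sqrt.2 h_const) (by positivity))
  rw [mul_div_assoc c, mul_div_assoc c, mul_left_comm]
  gcongr

end BallInversion

lemma sigmaInv_eq_ballInversion {n : ℕ} {a : EuclideanSpace ℝ (Fin n)} (ha : a ≠ 0)
    (ha1 : ‖a‖ < 1) : sigmaInv a = ballInversion a := by
  ext1 x
  rw [sigmaInv, ballInversion, EuclideanGeometry.inversion, div_pow,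
    sq_sqrt (inv_norm_sq_sub_one_pos ha ha1).le, dist_eq_norm, vsub_eq_sub, vadd_eq_add, add_comm,
    ballPole]

theorem punctured_case_two_bound (n : ℕ) (hn : 2 ≤ n)
    (a : EuclideanSpace ℝ (Fin n)) (haB : ‖a‖ < 1) (ha0 : a ≠ 0)
    (c : ℝ) (hc : 0 < c)
    (x y : EuclideanSpace ℝ (Fin n))
    (hx : ‖x‖ < 1) (hx0 : x ≠ 0) (hy : ‖y‖ < 1) (hy0 : y ≠ 0)
    (hyx : ‖y‖ ≤ ‖x‖) :
    Real.log (1 + c * ‖sigmaInv a x - sigmaInv a y‖ /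
        Real.sqrt (‖sigmaInv a x - a‖ * (1 - ‖sigmaInv a y‖))) ≤
      Real.sqrt (2 * (1 + ‖a‖) / (2 - ‖a‖)) * hP c 0 x y := by
  simpa only [sigmaInv_eq_ballInversion ha0 haB, hP, sub_zero] using
    punctured_case_two_bound_general haB ha0 hc.le hx hx0 hy hy0
end
end
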